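/- arXiv:2301.11532 — 5 statements merged into one kernel-verified Lean document; each statement's English description precedes it below -/
import Mathlib

section
/- For every natural number N and every N×N complex matrix Z, the squared modulus of the permanent decomposes as |Per(Z)|² = ∑_{k=0}^{N} f^{=2(N−k)}(Z). -/
/-- The permanent of an `N × N` complex matrix (given as `Fin N → Fin N → ℂ`):
`Per(Z) = ∑_{σ ∈ S_N} ∏_i Z (σ i) i`. -/
noncomputable def perm (N : ℕ) (Z : Fin N → Fin N → ℂ) : ℂ :=
  ∑ σ : Equiv.Perm (Fin N), ∏ i, Z (σ i) i

/-- `h₂(z) = z * conj z - 1`. -/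
noncomputable def h2 (z : ℂ) : ℂ := z * (starRingEnd ℂ) z - 1

/-- The degree-`2(N-k)` part `f^{=2(N-k)}(Z)` of `|Per Z|²`:
sum over `R, R' ⊆ [N]` with `|R| = |R'| = k` of `k!` times the sum over pairs of
bijections `σ', ρ' : Rᶜ → R'ᶜ` of
`∏_{i ∈ S(σ',ρ')} h₂(Z_{σ'(i),i}) · ∏_{i ∈ Rᶜ ∖ S(σ',ρ')} Z_{σ'(i),i} conj(Z_{ρ'(i),i})`,
where `S(σ',ρ') = {i ∈ Rᶜ : σ'(i) = ρ'(i)}`. -/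
noncomputable def fdeg (N k : ℕ) (Z : Fin N → Fin N → ℂ) : ℂ :=
  ∑ R ∈ Finset.powersetCard k (Finset.univ : Finset (Fin N)),
  ∑ R' ∈ Finset.powersetCard k (Finset.univ : Finset (Fin N)),
    (Nat.factorial k : ℂ) *
      ∑ σ' : {i : Fin N // i ∈ Rᶜ} ≃ {i : Fin N // i ∈ R'ᶜ},
      ∑ ρ' : {i : Fin N // i ∈ Rᶜ} ≃ {i : Fin N // i ∈ R'ᶜ},
        ∏ i : {i : Fin N // i ∈ Rᶜ},
          if σ' i = ρ' i then h2 (Z (σ' i) i)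
          else Z (σ' i) i * (starRingEnd ℂ) (Z (ρ' i) i)

/-!
Write `Per A * Per B` as a sum over pairs of permutations `(σ, ρ)` and split each factor
`A (σ i) i * B (ρ i) i` as `[σ i = ρ i] + g (σ i) (ρ i) i`, which defines `g`. Expanding the
product over `i` chooses the set `R` on which the indicator is taken, and only pairs agreeing on
`R` survive. Such a pair consists of the image `R'` of `R`, the common restriction `R ≃ R'`, and
the two restrictions `Rᶜ ≃ R'ᶜ`. The summand depends only on the last two, so the common
restrictions contribute the factor `|R|!`.
-/

section AgreeingPairs

open Finset

variable {α β : Type*}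

theorem map_eq_of_extends {R : Finset α} {R' : Finset β} (e : R ≃ R') (σ : α ≃ β)
    (hσ : ∀ i : R, σ i = e i) : R.map σ.toEmbedding = R' := by
  refine eq_of_subset_of_card_le (fun j hj => ?_) (by rw [card_map, card_eq_of_equiv e])
  obtain ⟨i, hi, rfl⟩ := mem_map.mp hj
  exact (hσ ⟨i, hi⟩).symm ▸ (e ⟨i, hi⟩).2

variable [Fintype α] [Fintype β] [DecidableEq α] [DecidableEq β]

/-- The extensions of a fixed bijection `R ≃ R'` to a bijection `α ≃ β`, parametrized by their
restrictions to the complements. It restates `Equiv.Set.compl` for finsets. -/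
def extensionsEquivCompl {R : Finset α} {R' : Finset β} (e : R ≃ R') :
    {σ : α ≃ β // ∀ i : R, σ i = e i} ≃ (↥Rᶜ ≃ ↥R'ᶜ) :=
  (Equiv.Set.compl (s := (R : Set α)) (t := (R' : Set β)) e).trans <|
    Equiv.equivCongr (Equiv.subtypeEquivRight fun _ => mem_compl.symm)
      (Equiv.subtypeEquivRight fun _ => mem_compl.symm)

/-- The pairs of bijections that agree on `R` and map it onto `R'`. -/
abbrev AgreeingPairs (R : Finset α) (R' : Finset β) : Type _ :=
  {p : (α ≃ β) × (α ≃ β) // (∀ i ∈ R, p.1 i = p.2 i) ∧ R.map p.1.toEmbedding = R'}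

/-- An agreeing pair amounts to its common restriction and two extensions of that restriction. -/
def agreeingPairsEquivExtensions (R : Finset α) (R' : Finset β) :
    AgreeingPairs R R' ≃
      Σ e : R ≃ R', {σ : α ≃ β // ∀ i : R, σ i = e i} × {ρ : α ≃ β // ∀ i : R, ρ i = e i} where
  toFun p := ⟨p.1.1.subtypeEquiv fun i => by simp [← p.2.2],
    ⟨p.1.1, fun _ => rfl⟩, ⟨p.1.2, fun i => (p.2.1 i i.2).symm⟩⟩
  invFun x := ⟨(x.2.1, x.2.2), fun i hi => (x.2.1.2 ⟨i, hi⟩).trans (x.2.2.2 ⟨i, hi⟩).symm,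
    map_eq_of_extends x.1 x.2.1 x.2.1.2⟩
  left_inv _ := rfl
  right_inv := by
    rintro ⟨e, ⟨σ, hσ⟩, ρ, hρ⟩
    have hmem : ∀ i, i ∈ R ↔ σ i ∈ R' := fun i => by simp [← map_eq_of_extends e σ hσ]
    obtain rfl : σ.subtypeEquiv hmem = e := Equiv.ext fun i => Subtype.ext (hσ i)
    rfl

/-- An agreeing pair amounts to its common restriction to `R` and the two restrictions to `Rᶜ`. -/
def agreeingPairsEquivRestrictions (R : Finset α) (R' : Finset β) :
    AgreeingPairs R R' ≃ (R ≃ R') × (↥Rᶜ ≃ ↥R'ᶜ) × (↥Rᶜ ≃ ↥R'ᶜ) :=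
  (agreeingPairsEquivExtensions R R').trans <|
    (Equiv.sigmaCongrRight fun e =>
      (extensionsEquivCompl e).prodCongr (extensionsEquivCompl e)).trans
    (Equiv.sigmaEquivProd _ _)

variable {K : Type*} [CommSemiring K]

theorem sum_agreeingPairs_prod_compl {R : Finset α} {R' : Finset β} (hcard : #R = #R')
    (g : β → β → α → K) :
    ∑ p : AgreeingPairs R R', ∏ i ∈ Rᶜ, g (p.1.1 i) (p.1.2 i) i =
      (#R).factorial * ∑ s : ↥Rᶜ ≃ ↥R'ᶜ, ∑ r : ↥Rᶜ ≃ ↥R'ᶜ, ∏ i, g (s i) (r i) i := by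
  have hcount : Fintype.card (R ≃ R') = (#R).factorial := by
    rw [Fintype.card_equiv (equivOfCardEq hcard), Fintype.card_coe]
  calc
    _ = ∑ x : (R ≃ R') × (↥Rᶜ ≃ ↥R'ᶜ) × (↥Rᶜ ≃ ↥R'ᶜ), ∏ i, g (x.2.1 i) (x.2.2 i) i :=
      -- The restrictions attached to `p` take the values of `p.1.1` and `p.1.2` definitionally.
      Fintype.sum_equiv (agreeingPairsEquivRestrictions R R') _ _ fun _ => (prod_coe_sort Rᶜ _).symm
    _ = _ := by
      simp only [Fintype.sum_prod_type, sum_const, card_univ, hcount, nsmul_eq_mul]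

theorem sum_filter_agree_prod_compl (R : Finset α) (g : β → β → α → K) :
    ∑ p : (α ≃ β) × (α ≃ β) with ∀ i ∈ R, p.1 i = p.2 i, ∏ i ∈ Rᶜ, g (p.1 i) (p.2 i) i =
      ∑ R' ∈ powersetCard #R (univ : Finset β), (#R).factorial *
        ∑ s : ↥Rᶜ ≃ ↥R'ᶜ, ∑ r : ↥Rᶜ ≃ ↥R'ᶜ, ∏ i, g (s i) (r i) i := by
  rw [← sum_fiberwise_of_maps_to (t := powersetCard #R (univ : Finset β))
    (g := fun p : (α ≃ β) × (α ≃ β) => R.map p.1.toEmbedding) (by simp [mem_powersetCard])]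
  refine sum_congr rfl fun R' hR' => ?_
  rw [filter_filter, ← sum_agreeingPairs_prod_compl (mem_powersetCard.mp hR').2.symm]
  exact sum_subtype _ (by simp) _

theorem sum_prod_ite_add (g : β → β → α → K) :
    ∑ p : (α ≃ β) × (α ≃ β), ∏ i, ((if p.1 i = p.2 i then 1 else 0) + g (p.1 i) (p.2 i) i) =
      ∑ R : Finset α, ∑ p : (α ≃ β) × (α ≃ β) with ∀ i ∈ R, p.1 i = p.2 i,
        ∏ i ∈ Rᶜ, g (p.1 i) (p.2 i) i := by
  simp only [Fintype.prod_add, prod_boole, ite_mul, one_mul, zero_mul, sum_filter]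
  exact sum_comm

end AgreeingPairs

section PermanentProduct

open Finset

variable {n K : Type*} [Fintype n] [DecidableEq n]

theorem map_permanent {L : Type*} [CommSemiring K] [CommSemiring L] (f : K →+* L)
    (A : Matrix n n K) : f A.permanent = (A.map f).permanent := by
  simp only [Matrix.permanent, map_sum, map_prod, Matrix.map_apply]

theorem permanent_mul_permanent [CommSemiring K] (A B : Matrix n n K) :
    A.permanent * B.permanent =
      ∑ p : Equiv.Perm n × Equiv.Perm n, ∏ i, A (p.1 i) i * B (p.2 i) i := by
  simp only [Matrix.permanent, Fintype.sum_mul_sum, prod_mul_distrib, Fintype.sum_prod_type]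

variable [CommRing K]

/-- The part of `Per A * Per B` coming from the sets `R` with `k` elements. It is the bilinear
analogue of `fdeg`, which is recovered when `B` is the entrywise conjugate of `A`. -/
def permanentProductPart (k : ℕ) (A B : Matrix n n K) : K :=
  ∑ R ∈ powersetCard k (univ : Finset n), ∑ R' ∈ powersetCard k (univ : Finset n),
    k.factorial * ∑ s : ↥Rᶜ ≃ ↥R'ᶜ, ∑ r : ↥Rᶜ ≃ ↥R'ᶜ, ∏ i,
      if s i = r i then A (s i) i * B (s i) i - 1 else A (s i) i * B (r i) i

theorem squared_modulus_permanent_decomposition_general (A B : Matrix n n K) :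
    A.permanent * B.permanent =
      ∑ k ∈ range (Fintype.card n + 1), permanentProductPart k A B := by
  let g (a b i : n) : K := if a = b then A a i * B a i - 1 else A a i * B b i
  have hsplit (a b i : n) : A a i * B b i = (if a = b then 1 else 0) + g a b i := by
    by_cases hab : a = b <;> simp [g, hab]
  simp only [permanent_mul_permanent, hsplit]
  rw [sum_prod_ite_add, ← powerset_univ, sum_powerset, card_univ]
  refine sum_congr rfl fun k _ => sum_congr rfl fun R hR => ?_
  obtain rfl : #R = k := (mem_powersetCard.mp hR).2
  rw [sum_filter_agree_prod_compl]
  simp only [g, Subtype.coe_inj]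

end PermanentProduct

theorem perm_eq_permanent (N : ℕ) (Z : Fin N → Fin N → ℂ) :
    perm N Z = (Matrix.of Z).permanent :=
  rfl

theorem fdeg_eq_permanentProductPart (N k : ℕ) (Z : Fin N → Fin N → ℂ) :
    fdeg N k Z = permanentProductPart k (Matrix.of Z) ((Matrix.of Z).map (starRingEnd ℂ)) :=
  rfl

/-- For every `N` and every `N×N` complex matrix `Z`,
`|Per(Z)|² = ∑_{k=0}^{N} f^{=2(N−k)}(Z)`. -/
theorem squared_modulus_permanent_decomposition (N : ℕ) (Z : Fin N → Fin N → ℂ) :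
    perm N Z * (starRingEnd ℂ) (perm N Z) = ∑ k ∈ Finset.range (N + 1), fdeg N k Z := by
  simpa only [perm_eq_permanent, map_permanent, fdeg_eq_permanentProductPart, Fintype.card_fin]
    using squared_modulus_permanent_decomposition_general (Matrix.of Z)
      ((Matrix.of Z).map (starRingEnd ℂ))
end

section
/- Let Z be a random N×N complex matrix with i.i.d. standard complex Gaussian entries. For any 0 ≤ k₁, k₂ ≤ N with k₁ ≠ k₂, the expectation E_Z[ f^{=2(N−k₁)}(Z) · conj( f^{=2(N−k₂)}(Z) ) ] = 0. -/
open MeasureTheory ProbabilityTheory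

/-- The standard complex Gaussian measure on `ℂ`: the distribution of `a + b i`
where `a, b` are independent real Gaussians of mean `0` and variance `1/2`. -/
noncomputable def stdCGaussian : Measure ℂ :=
  ((gaussianReal 0 (1 / 2)).prod (gaussianReal 0 (1 / 2))).map
    (fun p => (p.1 : ℂ) + (p.2 : ℂ) * Complex.I)

/-- The distribution of an `N×N` random complex matrix with i.i.d. standard
complex Gaussian entries. -/
noncomputable def matrixGaussian (N : ℕ) : Measure (Fin N → Fin N → ℂ) :=
  Measure.pi fun _ : Fin N => Measure.pi fun _ : Fin N => stdCGaussian

/-!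
Since `σ'` and `ρ'` are defined column by column, each summand of `f^{=2(N-k)}` is a product over
the columns `i ∉ R` of a function of the `i`-th column alone, namely of the Wick product
`Z_{σ'(i),i} conj(Z_{ρ'(i),i}) - δ_{σ'(i),ρ'(i)}`, which has mean zero. The columns of `Z` are
independent, so the summands belonging to `R₁ ≠ R₂` are orthogonal, as in a Hoeffding decomposition:
a column lying in only one of `R₁`, `R₂` contributes a factor of mean zero.
-/

open scoped ComplexConjugate

section BilinearOrthogonality

variable {α 𝕜 : Type*} [RCLike 𝕜] {mα : MeasurableSpace α}

/-- The functions `f` orthogonal to `g` for the bilinear pairing `∫ x, f x * g x ∂μ`.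
Integrability of `f * g` is part of membership, since without it the vanishing of the integral
would not be stable under addition. -/
def integralAnnihilator (μ : Measure α) (g : α → 𝕜) : Submodule 𝕜 (α → 𝕜) where
  carrier := {f | Integrable (fun x ↦ f x * g x) μ ∧ ∫ x, f x * g x ∂μ = 0}
  zero_mem' := by simp
  add_mem' := by
    rintro f₁ f₂ ⟨hi₁, h₁⟩ ⟨hi₂, h₂⟩
    simp only [Set.mem_ofPred_eq, Pi.add_apply, add_mul]
    exact ⟨hi₁.add hi₂, by rw [integral_add hi₁ hi₂, h₁, h₂, add_zero]⟩
  smul_mem' := by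
    rintro a f ⟨hi, h⟩
    simp only [Set.mem_ofPred_eq, Pi.smul_apply, smul_eq_mul, mul_assoc]
    exact ⟨hi.const_mul a, by rw [integral_const_mul, h, mul_zero]⟩

theorem mem_integralAnnihilator {μ : Measure α} {f g : α → 𝕜} :
    f ∈ integralAnnihilator μ g ↔
      Integrable (fun x ↦ f x * g x) μ ∧ ∫ x, f x * g x ∂μ = 0 :=
  Iff.rfl

theorem mem_integralAnnihilator_comm {μ : Measure α} {f g : α → 𝕜} :
    f ∈ integralAnnihilator μ g ↔ g ∈ integralAnnihilator μ f := by
  simp only [mem_integralAnnihilator, mul_comm]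

end BilinearOrthogonality

section Independence

variable {ι κ Ω E 𝕜 : Type*} [RCLike 𝕜] {mΩ : MeasurableSpace Ω} {mE : MeasurableSpace E}
  {P : Measure Ω}

theorem integrable_fun_prod_of_iIndepFun [Fintype ι] {Y : ι → Ω → 𝕜} (hY : iIndepFun Y P)
    (hint : ∀ i, Integrable (Y i) P) : Integrable (fun ω ↦ ∏ i, Y i ω) P := by
  have hP := hY.isProbabilityMeasure
  have hm (i : ι) : AEMeasurable (Y i) P := (hint i).aemeasurable
  have _ (i : ι) : IsProbabilityMeasure (P.map (Y i)) :=
    Measure.isProbabilityMeasure_map (hm i)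
  have hid (i : ι) : Integrable id (P.map (Y i)) :=
    (integrable_map_measure aestronglyMeasurable_id (hm i)).2 (hint i)
  have hpi := Integrable.fintype_prod hid
  rw [← hY.map_fun_eq_pi_map hm] at hpi
  exact hpi.comp_aemeasurable (aemeasurable_pi_lambda _ hm)

theorem iIndepFun_curry {X : ι → κ → Ω → E} (hm : ∀ i j, Measurable (X i j))
    (hX : iIndepFun (fun (p : ι × κ) ↦ X p.1 p.2) P) :
    iIndepFun (fun i ω j ↦ X i j ω) P := by
  have hP := hX.isProbabilityMeasure
  have _ (i : ι) (j : κ) : IsProbabilityMeasure (P.map (X i j)) :=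
    Measure.isProbabilityMeasure_map (hm i j).aemeasurable
  have hrow (i : ι) :
      P.map (fun ω j ↦ X i j ω) = Measure.infinitePi fun j ↦ P.map (X i j) :=
    (hX.precomp (Prod.mk_right_injective i)).map_fun_eq_infinitePi_map (hm i)
  rw [iIndepFun_iff_map_fun_eq_infinitePi_map (by fun_prop)]
  calc P.map (fun ω i j ↦ X i j ω)
      = (P.map fun ω (p : ι × κ) ↦ X p.1 p.2 ω).map (MeasurableEquiv.curry ι κ E) :=
        by rw [Measure.map_map (by fun_prop) (by fun_prop)]; rfl
    _ = Measure.infinitePi fun i ↦ Measure.infinitePi fun j ↦ P.map (X i j) := by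
        rw [hX.map_fun_eq_infinitePi_map (by fun_prop),
          Measure.infinitePi_map_curry fun i j ↦ P.map (X i j)]
    _ = Measure.infinitePi fun i ↦ P.map (fun ω j ↦ X i j ω) := by simp only [hrow]

theorem prod_mem_integralAnnihilator_prod [Finite ι] {X : ι → Ω → E} {f g : ι → E → 𝕜}
    (hX : iIndepFun X P) (hf : ∀ i, Measurable (f i)) (hg : ∀ i, Measurable (g i))
    (hf2 : ∀ i, MemLp (fun ω ↦ f i (X i ω)) 2 P) (hg2 : ∀ i, MemLp (fun ω ↦ g i (X i ω)) 2 P)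
    (hf0 : ∀ i, ∫ ω, f i (X i ω) ∂P = 0) (hg0 : ∀ i, ∫ ω, g i (X i ω) ∂P = 0)
    {S T : Finset ι} (hST : S ≠ T) :
    (fun ω ↦ ∏ i ∈ S, f i (X i ω)) ∈
      integralAnnihilator P (fun ω ↦ ∏ i ∈ T, g i (X i ω)) := by
  classical
  cases nonempty_fintype ι
  have hP := hX.isProbabilityMeasure
  let F (i : ι) (x : E) : 𝕜 := if i ∈ S then f i x else 1
  let G (i : ι) (x : E) : 𝕜 := if i ∈ T then g i x else 1
  have hFm (i : ι) : Measurable (F i) := by unfold F; split_ifs <;> fun_prop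
  have hGm (i : ι) : Measurable (G i) := by unfold G; split_ifs <;> fun_prop
  have hF2 (i : ι) : MemLp (fun ω ↦ F i (X i ω)) 2 P := by
    unfold F; split_ifs; exacts [hf2 i, memLp_const 1]
  have hG2 (i : ι) : MemLp (fun ω ↦ G i (X i ω)) 2 P := by
    unfold G; split_ifs; exacts [hg2 i, memLp_const 1]
  have hint (i : ι) : Integrable (fun ω ↦ F i (X i ω) * G i (X i ω)) P :=
    (hF2 i).integrable_mul (hG2 i)
  have hind : iIndepFun (fun i ω ↦ F i (X i ω) * G i (X i ω)) P :=
    hX.comp (fun i x ↦ F i x * G i x) fun i ↦ (hFm i).mul (hGm i)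
  have hprod (ω : Ω) : (∏ i ∈ S, f i (X i ω)) * ∏ i ∈ T, g i (X i ω) =
      ∏ i, F i (X i ω) * G i (X i ω) := by
    simp only [F, G, Finset.prod_mul_distrib, Finset.prod_ite_mem, Finset.univ_inter]
  simp only [mem_integralAnnihilator, hprod]
  refine ⟨integrable_fun_prod_of_iIndepFun hind hint, ?_⟩
  rw [hind.integral_fun_prod_eq_prod_integral fun i ↦ (hint i).aestronglyMeasurable]
  obtain ⟨i, hi⟩ : ∃ i, ¬(i ∈ S ↔ i ∈ T) := by simpa [Finset.ext_iff] using hST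
  refine Finset.prod_eq_zero (Finset.mem_univ i) ?_
  by_cases hiS : i ∈ S
  · have hiT : i ∉ T := by tauto
    simpa [F, G, hiS, hiT] using hf0 i
  · have hiT : i ∈ T := by tauto
    simpa [F, G, hiS, hiT] using hg0 i

end Independence

section WickProduct

variable {ι Ω : Type*} [DecidableEq ι] {mΩ : MeasurableSpace Ω} {P : Measure Ω}

/-- The Wick product `x_a * conj x_b - δ_{ab}` of two coordinates of a vector `x`; it is centred
whenever `x` is random and isotropic, i.e. `E[x_a * conj x_b] = δ_{ab}`. -/
noncomputable def wickProduct (a b : ι) (x : ι → ℂ) : ℂ :=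
  x a * conj (x b) - if a = b then 1 else 0

theorem ite_h2_eq_wickProduct (a b : ι) (x : ι → ℂ) :
    (if a = b then h2 (x a) else x a * conj (x b)) = wickProduct a b x := by
  by_cases hab : a = b <;> simp [wickProduct, h2, hab]

theorem conj_wickProduct (a b : ι) (x : ι → ℂ) :
    conj (wickProduct a b x) = wickProduct b a x := by
  simp [wickProduct, mul_comm, eq_comm, apply_ite conj]

theorem measurable_wickProduct (a b : ι) : Measurable (wickProduct a b) := by
  unfold wickProduct
  fun_prop

variable {X : Ω → ι → ℂ}

theorem memLp_mul_conj {f g : Ω → ℂ} (hf : MemLp f 4 P) (hg : MemLp g 4 P) :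
    MemLp (fun ω ↦ f ω * conj (g ω)) 2 P := by
  have : ENNReal.HolderTriple 4 4 2 := ⟨by
    rw [← ENNReal.toReal_eq_toReal_iff' (by simp) (by simp),
      ENNReal.toReal_add (by simp) (by simp)]
    norm_num⟩
  exact hg.star.mul hf

theorem memLp_wickProduct [IsFiniteMeasure P] (hX : ∀ a, MemLp (fun ω ↦ X ω a) 4 P) (a b : ι) :
    MemLp (fun ω ↦ wickProduct a b (X ω)) 2 P :=
  (memLp_mul_conj (hX a) (hX b)).sub (memLp_const _)

theorem integral_wickProduct_eq_zero [IsProbabilityMeasure P]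
    (hX : ∀ a, MemLp (fun ω ↦ X ω a) 4 P)
    (hiso : ∀ a b, ∫ ω, X ω a * conj (X ω b) ∂P = if a = b then 1 else 0) (a b : ι) :
    ∫ ω, wickProduct a b (X ω) ∂P = 0 := by
  have hint : Integrable (fun ω ↦ X ω a * conj (X ω b)) P :=
    (memLp_mul_conj (hX a) (hX b)).integrable one_le_two
  simp only [wickProduct]
  rw [integral_sub hint (integrable_const _), hiso, integral_const, probReal_univ, one_smul,
    sub_self]

end WickProduct

section DegreePart

variable {N k : ℕ}

theorem fdeg_eq_sum_prod_wickProduct (N k : ℕ) :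
    fdeg N k =
      ∑ R ∈ Finset.powersetCard k (Finset.univ : Finset (Fin N)),
      ∑ R' ∈ Finset.powersetCard k (Finset.univ : Finset (Fin N)),
        (Nat.factorial k : ℂ) •
          ∑ σ : {i : Fin N // i ∈ Rᶜ} ≃ {i : Fin N // i ∈ R'ᶜ},
          ∑ ρ : {i : Fin N // i ∈ Rᶜ} ≃ {i : Fin N // i ∈ R'ᶜ},
            fun Z ↦ ∏ i : {i : Fin N // i ∈ Rᶜ},
              wickProduct (σ i : Fin N) (ρ i) fun r ↦ Z r i := by
  funext Z
  simp only [fdeg, ← ite_h2_eq_wickProduct, Subtype.ext_iff, Finset.sum_apply, Pi.smul_apply,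
    smul_eq_mul]

theorem conj_fdeg (N k : ℕ) (Z : Fin N → Fin N → ℂ) : conj (fdeg N k Z) = fdeg N k Z := by
  simp only [fdeg_eq_sum_prod_wickProduct, Finset.sum_apply, Pi.smul_apply, smul_eq_mul, map_sum,
    map_mul, map_prod, conj_wickProduct, Complex.conj_natCast]
  refine Finset.sum_congr rfl fun R _ ↦ Finset.sum_congr rfl fun R' _ ↦ ?_
  rw [Finset.sum_comm]

theorem fdeg_mem_of_forall_prod_wickProduct_mem
    {V : Submodule ℂ ((Fin N → Fin N → ℂ) → ℂ)}
    (hV : ∀ R : Finset (Fin N), R.card = k → ∀ a b : Fin N → Fin N,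
      (fun Z ↦ ∏ i ∈ Rᶜ, wickProduct (a i) (b i) fun r ↦ Z r i) ∈ V) :
    fdeg N k ∈ V := by
  have hσρ (R R' : Finset (Fin N)) (hR : R.card = k)
      (σ ρ : {i : Fin N // i ∈ Rᶜ} ≃ {i : Fin N // i ∈ R'ᶜ}) :
      (fun Z ↦ ∏ i : {i : Fin N // i ∈ Rᶜ},
        wickProduct (σ i : Fin N) (ρ i) fun r ↦ Z r i) ∈ V := by
    let extend (τ : {i : Fin N // i ∈ Rᶜ} ≃ {i : Fin N // i ∈ R'ᶜ}) : Fin N → Fin N :=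
      Function.extend Subtype.val (fun i ↦ (τ i : Fin N)) id
    have extend_apply (τ) (i : {i : Fin N // i ∈ Rᶜ}) : extend τ i = τ i :=
      Subtype.val_injective.extend_apply _ _ i
    simpa only [← Finset.prod_coe_sort Rᶜ, extend_apply] using hV R hR (extend σ) (extend ρ)
  rw [fdeg_eq_sum_prod_wickProduct]
  exact V.sum_mem fun R hR ↦ V.sum_mem fun R' _ ↦ V.smul_mem _ <| V.sum_mem fun σ _ ↦
    V.sum_mem fun ρ _ ↦ hσρ R R' (Finset.mem_powersetCard_univ.mp hR) σ ρ

theorem fdeg_orthogonal_general {P : Measure (Fin N → Fin N → ℂ)} {k₁ k₂ : ℕ}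
    (hind : iIndepFun (fun c (Z : Fin N → Fin N → ℂ) r ↦ Z r c) P)
    (hmem : ∀ r c, MemLp (fun Z : Fin N → Fin N → ℂ ↦ Z r c) 4 P)
    (hiso : ∀ c r s, ∫ Z, Z r c * conj (Z s c) ∂P = if r = s then 1 else 0)
    (hne : k₁ ≠ k₂) :
    ∫ Z, fdeg N k₁ Z * conj (fdeg N k₂ Z) ∂P = 0 := by
  have hP := hind.isProbabilityMeasure
  have hmemLp (c a b : Fin N) :
      MemLp (fun Z : Fin N → Fin N → ℂ ↦ wickProduct a b fun r ↦ Z r c) 2 P :=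
    memLp_wickProduct (fun r ↦ hmem r c) a b
  have hcentred (c a b : Fin N) : ∫ Z, wickProduct a b (fun r ↦ Z r c) ∂P = 0 :=
    integral_wickProduct_eq_zero (fun r ↦ hmem r c) (hiso c) a b
  simp only [conj_fdeg]
  suffices fdeg N k₁ ∈ integralAnnihilator P (fdeg N k₂) from this.2
  refine fdeg_mem_of_forall_prod_wickProduct_mem fun R₁ hR₁ a b ↦ ?_
  rw [mem_integralAnnihilator_comm]
  refine fdeg_mem_of_forall_prod_wickProduct_mem fun R₂ hR₂ a' b' ↦ ?_
  have hR : R₂ᶜ ≠ R₁ᶜ := fun h ↦ hne (by rw [← hR₁, ← hR₂, compl_injective h])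
  exact prod_mem_integralAnnihilator_prod hind
    (fun c ↦ measurable_wickProduct (a' c) (b' c)) (fun c ↦ measurable_wickProduct (a c) (b c))
    (fun c ↦ hmemLp c _ _) (fun c ↦ hmemLp c _ _)
    (fun c ↦ hcentred c _ _) (fun c ↦ hcentred c _ _) hR

end DegreePart

section ComplexGaussian

instance : IsProbabilityMeasure stdCGaussian :=
  Measure.isProbabilityMeasure_map (by fun_prop)

theorem memLp_id_stdCGaussian {p : ENNReal} (hp : p ≠ ⊤) : MemLp id p stdCGaussian := by
  have h : MemLp id p (gaussianReal 0 (1 / 2)) := memLp_id_gaussianReal' p hp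
  rw [stdCGaussian, memLp_map_measure_iff (by fun_prop) (by fun_prop)]
  have hre : MemLp (fun x : ℝ × ℝ ↦ (x.1 : ℂ)) p
      ((gaussianReal 0 (1 / 2)).prod (gaussianReal 0 (1 / 2))) := (h.comp_fst _).ofReal
  have him : MemLp (fun x : ℝ × ℝ ↦ (x.2 : ℂ)) p
      ((gaussianReal 0 (1 / 2)).prod (gaussianReal 0 (1 / 2))) := (h.comp_snd _).ofReal
  exact hre.add (him.mul_const Complex.I)

theorem integral_id_stdCGaussian : ∫ z, z ∂stdCGaussian = 0 := by
  have h : Integrable (fun x : ℝ ↦ (x : ℂ)) (gaussianReal 0 (1 / 2)) :=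
    ((memLp_id_gaussianReal' 1 ENNReal.one_ne_top).integrable le_rfl).ofReal
  rw [stdCGaussian, integral_map (by fun_prop) (by fun_prop),
    integral_add (h.comp_fst _) ((h.comp_snd _).mul_const Complex.I), integral_mul_const,
    integral_fun_fst (fun x : ℝ ↦ (x : ℂ)), integral_fun_snd (fun x : ℝ ↦ (x : ℂ)),
    integral_complex_ofReal, integral_id_gaussianReal]
  simp only [Complex.ofReal_zero, smul_zero, zero_mul, add_zero]

theorem integral_sq_gaussianReal_zero (v : NNReal) : ∫ x, x ^ 2 ∂gaussianReal 0 v = v := by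
  rw [← variance_of_integral_eq_zero aemeasurable_id' integral_id_gaussianReal,
    variance_fun_id_gaussianReal]

theorem integral_mul_conj_self_stdCGaussian : ∫ z, z * conj z ∂stdCGaussian = 1 := by
  have h : Integrable (fun x ↦ x ^ 2) (gaussianReal 0 (1 / 2)) :=
    (memLp_id_gaussianReal' 2 ENNReal.ofNat_ne_top).integrable_sq
  have hnormSq : ∫ z, Complex.normSq z ∂stdCGaussian = 1 := by
    rw [stdCGaussian, integral_map (by fun_prop) (by fun_prop)]
    simp only [Complex.normSq_add_mul_I]
    rw [integral_add (h.comp_fst _) (h.comp_snd _), integral_fun_fst (fun x : ℝ ↦ x ^ 2),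
      integral_fun_snd (fun x : ℝ ↦ x ^ 2), integral_sq_gaussianReal_zero]
    norm_num
  simp only [Complex.mul_conj, integral_complex_ofReal, hnormSq, Complex.ofReal_one]

end ComplexGaussian

section GaussianMatrix

variable {N : ℕ}

theorem hasLaw_entry_matrixGaussian (r c : Fin N) :
    HasLaw (fun Z : Fin N → Fin N → ℂ ↦ Z r c) stdCGaussian (matrixGaussian N) :=
  ((measurePreserving_eval (fun _ ↦ stdCGaussian) c).comp
    (measurePreserving_eval (fun _ ↦ Measure.pi fun _ ↦ stdCGaussian) r)).hasLaw

theorem iIndepFun_entries_matrixGaussian :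
    iIndepFun (fun (p : Fin N × Fin N) (Z : Fin N → Fin N → ℂ) ↦ Z p.1 p.2)
      (matrixGaussian N) := by
  simpa only [matrixGaussian, Measure.infinitePi_eq_pi, id_eq] using
    iIndepFun_uncurry_infinitePi' (X := fun _ _ ↦ id) (fun _ _ : Fin N ↦ stdCGaussian)
      fun _ _ ↦ measurable_id

theorem iIndepFun_columns_matrixGaussian :
    iIndepFun (fun c (Z : Fin N → Fin N → ℂ) r ↦ Z r c) (matrixGaussian N) :=
  iIndepFun_curry (by fun_prop) (iIndepFun_entries_matrixGaussian.precomp Prod.swap_injective)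

theorem memLp_entry_matrixGaussian {p : ENNReal} (hp : p ≠ ⊤) (r c : Fin N) :
    MemLp (fun Z : Fin N → Fin N → ℂ ↦ Z r c) p (matrixGaussian N) :=
  (memLp_id_stdCGaussian hp).comp_measurePreserving
    ((hasLaw_entry_matrixGaussian r c).measurePreserving (by fun_prop))

theorem integral_entry_mul_conj_entry_matrixGaussian (c r s : Fin N) :
    ∫ Z, Z r c * conj (Z s c) ∂matrixGaussian N = if r = s then 1 else 0 := by
  split_ifs with hrs
  · subst hrs
    exact ((hasLaw_entry_matrixGaussian r c).integral_comp
      (f := fun z ↦ z * conj z) (by fun_prop)).trans integral_mul_conj_self_stdCGaussian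
  · have hind : IndepFun (fun Z : Fin N → Fin N → ℂ ↦ Z r c) (fun Z ↦ Z s c)
        (matrixGaussian N) :=
      iIndepFun_entries_matrixGaussian.indepFun (i := (r, c)) (j := (s, c)) (by simpa using hrs)
    refine (hind.integral_fun_comp_mul_comp (f := id) (g := conj)
      (hasLaw_entry_matrixGaussian r c).aemeasurable (hasLaw_entry_matrixGaussian s c).aemeasurable
      (by fun_prop) (by fun_prop)).trans ?_
    simp only [id_eq, (hasLaw_entry_matrixGaussian r c).integral_eq, integral_id_stdCGaussian,
      zero_mul]

end GaussianMatrix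

/-- For a random `N×N` matrix `Z` with i.i.d. standard complex Gaussian
entries and `k₁ ≠ k₂` with `k₁, k₂ ≤ N`,
`E_Z[ f^{=2(N−k₁)}(Z) · conj(f^{=2(N−k₂)}(Z)) ] = 0`. -/
theorem fdeg_orthogonal (N k₁ k₂ : ℕ) (hk₁ : k₁ ≤ N) (hk₂ : k₂ ≤ N) (hne : k₁ ≠ k₂) :
    ∫ Z, fdeg N k₁ Z * (starRingEnd ℂ) (fdeg N k₂ Z) ∂(matrixGaussian N) = 0 :=
  fdeg_orthogonal_general iIndepFun_columns_matrixGaussian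
    (memLp_entry_matrixGaussian ENNReal.ofNat_ne_top)
    integral_entry_mul_conj_entry_matrixGaussian hne
end

section
/- Let Ω be a finite nonempty type, let p : Ω → ℝ be a probability distribution (p ≥ 0 pointwise, ∑_{x ∈ Ω} p(x) = 1), and let q : Ω → ℝ satisfy ∑_{x ∈ Ω} q(x) = 1 and ∑_{x ∈ Ω} |p(x) − q(x)| ≤ ε. Set S = ∑_{x ∈ Ω} max(q(x), 0) and define q'(x) = max(q(x), 0) / S. Then S ≥ 1, q' is a probability distribution on Ω, and ∑_{x ∈ Ω} |p(x) − q'(x)| ≤ 2ε. -/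
/-!
Let `S` be the total of `max q 0` and let `q' = max q 0 / S`. Then `|p - q'| ≤ |p - q| + (q - q')`
at every point: if `q' ≤ q` this is the triangle inequality; otherwise `q < 0`, because `S ≥ 1`, so
`q' = 0 ≤ p` and `|p - q'| = (p - q) + (q - q')`. As `q` and `q'` have the same total, the
corrections `q - q'` cancel in the sum. Hence renormalizing does not increase the `ℓ¹` distance at
all, and the factor `2` is not sharp.
-/

section OrderedGroup

variable {G : Type*} [AddCommGroup G] [LinearOrder G] [IsOrderedAddMonoid G]

theorem abs_sub_le_abs_sub_add_sub_of_le_max {a b c : G} (h : c ≤ max a b) :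
    |a - c| ≤ |a - b| + (b - c) := by
  rcases le_max_iff.mp h with hca | hcb
  · calc |a - c| = (a - b) + (b - c) := by
          rw [abs_of_nonneg (sub_nonneg.mpr hca), sub_add_sub_cancel]
      _ ≤ |a - b| + (b - c) := by gcongr; exact le_abs_self _
  · simpa only [abs_of_nonneg (sub_nonneg.mpr hcb)] using abs_sub_le a b c

theorem sum_abs_sub_le_sum_abs_sub_of_le_max {ι : Type*} {s : Finset ι} {a b c : ι → G}
    (hc : ∀ i ∈ s, c i ≤ max (a i) (b i)) (hsum : ∑ i ∈ s, b i ≤ ∑ i ∈ s, c i) :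
    ∑ i ∈ s, |a i - c i| ≤ ∑ i ∈ s, |a i - b i| :=
  calc ∑ i ∈ s, |a i - c i|
      ≤ ∑ i ∈ s, (|a i - b i| + (b i - c i)) :=
        Finset.sum_le_sum fun i hi => abs_sub_le_abs_sub_add_sub_of_le_max (hc i hi)
    _ = ∑ i ∈ s, |a i - b i| + (∑ i ∈ s, b i - ∑ i ∈ s, c i) := by
        rw [Finset.sum_add_distrib, Finset.sum_sub_distrib]
    _ ≤ ∑ i ∈ s, |a i - b i| := add_le_of_nonpos_right (sub_nonpos.mpr hsum)

end OrderedGroup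

section RenormPosPart

variable {Ω K : Type*} [Fintype Ω] [Field K] [LinearOrder K]

/-- The renormalized positive part `q'` of a quasi-probability `q`. It is identically `0` when `q`
has no positive value. -/
def renormPosPart (q : Ω → K) (x : Ω) : K :=
  max (q x) 0 / ∑ y, max (q y) 0

theorem sum_renormPosPart {q : Ω → K} (hq : ∑ x, max (q x) 0 ≠ 0) :
    ∑ x, renormPosPart q x = 1 := by
  simp only [renormPosPart, ← Finset.sum_div, div_self hq]

variable [IsStrictOrderedRing K]

theorem renormPosPart_nonneg (q : Ω → K) (x : Ω) : 0 ≤ renormPosPart q x :=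
  div_nonneg (le_max_right _ _) (Finset.sum_nonneg fun _ _ => le_max_right _ _)

theorem renormPosPart_le_max {q : Ω → K} (hq : 1 ≤ ∑ x, max (q x) 0) (x : Ω) :
    renormPosPart q x ≤ max (q x) 0 :=
  div_le_self (le_max_right _ _) hq

theorem renormalized_positive_part_general {p q : Ω → K} (hp : ∀ x, 0 ≤ p x)
    (hq : ∑ x, q x = 1) :
    1 ≤ ∑ x, max (q x) 0 ∧
    (∀ x, 0 ≤ renormPosPart q x) ∧
    ∑ x, renormPosPart q x = 1 ∧
    ∑ x, |p x - renormPosPart q x| ≤ ∑ x, |p x - q x| := by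
  have one_le_sum : 1 ≤ ∑ x, max (q x) 0 := hq ▸ Finset.sum_le_sum fun x _ => le_max_left (q x) 0
  have sum_eq_one : ∑ x, renormPosPart q x = 1 :=
    sum_renormPosPart (one_pos.trans_le one_le_sum).ne'
  have le_max_p_q (x : Ω) : renormPosPart q x ≤ max (p x) (q x) :=
    calc renormPosPart q x ≤ max (q x) 0 := renormPosPart_le_max one_le_sum x
      _ ≤ max (q x) (p x) := max_le_max_left _ (hp x)
      _ = max (p x) (q x) := max_comm _ _
  exact ⟨one_le_sum, renormPosPart_nonneg q, sum_eq_one,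
    sum_abs_sub_le_sum_abs_sub_of_le_max (fun x _ => le_max_p_q x) (hq.trans sum_eq_one.symm).le⟩

end RenormPosPart

/-- Let `Ω` be a finite nonempty type, `p` a probability distribution on
`Ω`, and `q : Ω → ℝ` a quasi-probability (`∑ q = 1`) with `∑ |p − q| ≤ ε`.  With
`S = ∑ max(q x) 0` and `q' x = max (q x) 0 / S`, we have `S ≥ 1`, `q'` is a probability
distribution, and `∑ |p − q'| ≤ 2ε`. -/
theorem renormalized_positive_part {Ω : Type*} [Fintype Ω] [Nonempty Ω] (ε : ℝ)
    (p q : Ω → ℝ) (hp0 : ∀ x, 0 ≤ p x) (hp1 : ∑ x, p x = 1)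
    (hq1 : ∑ x, q x = 1) (hpq : ∑ x, |p x - q x| ≤ ε) :
    1 ≤ ∑ x, max (q x) 0 ∧
    (∀ x, 0 ≤ max (q x) 0 / (∑ y, max (q y) 0)) ∧
    (∑ x, max (q x) 0 / (∑ y, max (q y) 0)) = 1 ∧
    ∑ x, |p x - max (q x) 0 / (∑ y, max (q y) 0)| ≤ 2 * ε := by
  obtain ⟨one_le_sum, nonneg, sum_eq_one, dist_le⟩ := renormalized_positive_part_general hp0 hq1
  have hε : 0 ≤ ε := (Finset.sum_nonneg fun x _ => abs_nonneg (p x - q x)).trans hpq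
  exact ⟨one_le_sum, nonneg, sum_eq_one,
    (dist_le.trans hpq).trans (le_mul_of_one_le_left hε one_le_two)⟩
end

section
/- Let N be a positive integer, 0 ≤ j ≤ N, and let a, b : [N] × [j] → ℂ be arbitrary complex numbers. Then ∑_{(σ,ρ) ∈ S_N × S_N, σ(i)=ρ(i) for all i with j < i ≤ N} ∏_{i=1}^{j} a(σ(i), i) · b(ρ(i), i) = (N−j)! · ∑_{J ⊆ [N], |J| = j} ∑_{σ₀, ρ₀} ∏_{i=1}^{j} a(σ₀(i), i) · b(ρ₀(i), i), where the inner sum on the right ranges over all pairs of bijections σ₀, ρ₀ : [j] → J. -/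
/-! Write `ρ = σ * π`: the two permutations agree off the range of `e` exactly when `π` fixes every
point off that range, that is, when `π` is a permutation `τ` of the index type `ι` extended along
`e`. So the pairs `(σ, ρ)` are the pairs `(σ, τ)`, and their restrictions along `e` are `f = σ ∘ e`
and `f ∘ τ`. Each embedding `f` has `(|α| - |ι|)!` extensions `σ`, one for every bijection between
the complements of the ranges of `e` and `f`. Finally an embedding `f` is a bijection `s` onto its
image `J`, and `f ∘ τ` then runs through all bijections onto the same `J`. -/

open Finset Equiv

section

variable {ι α M : Type*} [Fintype ι] [Fintype α] [DecidableEq α] [AddCommMonoid M]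

theorem sum_perm_fixing_compl_range [DecidableEq ι] (e : ι ↪ α) (G : Perm α → M) :
    ∑ π : Perm α with ∀ x ∉ Set.range e, π x = x, G π =
      ∑ τ : Perm ι, G (τ.viaFintypeEmbedding e) := by
  let extend : Perm ι ≃ {π : Perm α // ∀ x ∉ Set.range e, π x = x} :=
    e.toEquivRange.permCongr.trans (Perm.subtypeEquivSubtypePerm (· ∈ Set.range e))
  rw [sum_subtype (p := fun π : Perm α => ∀ x ∉ Set.range e, π x = x) _ (by simp),
    ← extend.sum_comp]
  rfl

theorem sum_perm_pairs_eqOn_compl_range [DecidableEq ι] (e : ι ↪ α) (G : Perm α → Perm α → M) :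
    ∑ σρ : Perm α × Perm α with ∀ x ∉ Set.range e, σρ.1 x = σρ.2 x, G σρ.1 σρ.2 =
      ∑ σ : Perm α, ∑ τ : Perm ι, G σ (σ * τ.viaFintypeEmbedding e) := by
  rw [sum_filter, Fintype.sum_prod_type]
  refine sum_congr rfl fun σ _ => ?_
  rw [← sum_perm_fixing_compl_range e fun π => G σ (σ * π), sum_filter,
    ← Equiv.sum_comp (Equiv.mulLeft σ)]
  simp [eq_comm]

theorem card_perm_extending_embedding (e f : ι ↪ α) :
    #{σ : Perm α | e.trans σ.toEmbedding = f} =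
      (Fintype.card α - Fintype.card ι).factorial := by
  let e₀ : Set.range e ≃ Set.range f := e.toEquivRange.symm.trans f.toEquivRange
  have extends_iff (σ : Perm α) : e.trans σ.toEmbedding = f ↔ ∀ x : Set.range e, σ x = e₀ x := by
    rw [Set.forall_subtype_range_iff]
    simp [DFunLike.ext_iff, e₀]
  have card_compl_range (g : ι ↪ α) :
      Fintype.card ((Set.range g)ᶜ : Set α) = Fintype.card α - Fintype.card ι := by
    rw [Fintype.card_compl_set, Set.card_range_of_injective g.injective]
  have compl_equiv : ((Set.range e)ᶜ : Set α) ≃ ((Set.range f)ᶜ : Set α) :=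
    Fintype.equivOfCardEq ((card_compl_range e).trans (card_compl_range f).symm)
  simp only [extends_iff]
  rw [← Fintype.card_subtype, Fintype.card_congr (Equiv.Set.compl e₀),
    Fintype.card_equiv compl_equiv, card_compl_range]

theorem sum_perm_restrict_embedding (e : ι ↪ α) (H : (ι ↪ α) → M) :
    ∑ σ : Perm α, H (e.trans σ.toEmbedding) =
      (Fintype.card α - Fintype.card ι).factorial • ∑ f : ι ↪ α, H f := by
  rw [← sum_fiberwise' univ (fun σ : Perm α => e.trans σ.toEmbedding) H, smul_sum]
  simp only [sum_const, card_perm_extending_embedding]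

/-- Bijections from `ι` onto a finite set `J ⊆ α` are the embeddings of `ι` into `α` with image `J`;
used to group embeddings by image. -/
def equivEmbeddingWithImage (J : Finset α) :
    (ι ≃ {x // x ∈ J}) ≃ {f : ι ↪ α // univ.map f = J} where
  toFun s := ⟨s.toEmbedding.trans (.subtype _), by ext; simp [s.exists_congr_left]⟩
  invFun f := f.1.toEquivRange.trans (Equiv.subtypeEquivRight (by simp [← f.2]))
  left_inv _ := Equiv.ext fun _ => rfl
  right_inv _ := rfl

theorem sum_embedding_eq_sum_powersetCard [DecidableEq ι] (H : (ι ↪ α) → M) :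
    ∑ f : ι ↪ α, H f = ∑ J ∈ powersetCard (Fintype.card ι) (univ : Finset α),
      ∑ s : ι ≃ {x // x ∈ J}, H (s.toEmbedding.trans (.subtype _)) := by
  rw [← sum_fiberwise_of_maps_to (g := fun f : ι ↪ α => univ.map f)
    (t := powersetCard (Fintype.card ι) univ) (by simp [mem_powersetCard])]
  refine sum_congr rfl fun J _ => ?_
  rw [sum_subtype (p := fun f : ι ↪ α => univ.map f = J) _ (by simp),
    ← (equivEmbeddingWithImage J).sum_comp]
  rfl

theorem restricted_permutation_pair_identity_general [DecidableEq ι] (e : ι ↪ α)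
    (F : (ι → α) → (ι → α) → M) :
    ∑ σρ : Perm α × Perm α with ∀ x ∉ Set.range e, σρ.1 x = σρ.2 x, F (σρ.1 ∘ e) (σρ.2 ∘ e) =
      (Fintype.card α - Fintype.card ι).factorial •
        ∑ J ∈ powersetCard (Fintype.card ι) (univ : Finset α),
          ∑ s : ι ≃ {x // x ∈ J}, ∑ r : ι ≃ {x // x ∈ J},
            F (fun i => s i) (fun i => r i) := by
  calc
    _ = ∑ σ : Perm α, ∑ τ : Perm ι, F (σ ∘ e) (σ ∘ e ∘ τ) := by
      rw [sum_perm_pairs_eqOn_compl_range e fun σ ρ => F (σ ∘ e) (ρ ∘ e)]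
      simp [Function.comp_def]
    _ = (Fintype.card α - Fintype.card ι).factorial •
        ∑ f : ι ↪ α, ∑ τ : Perm ι, F f (f ∘ τ) :=
      sum_perm_restrict_embedding e fun f => ∑ τ : Perm ι, F f (f ∘ τ)
    _ = _ := by
      rw [sum_embedding_eq_sum_powersetCard]
      congr! 3 with J _ s
      exact Equiv.sum_comp ((Equiv.refl ι).equivCongr s) fun r : ι ≃ J =>
        F (fun i => s i) (fun i => r i)

end

/-- For `j ≤ N` and arbitrary `a, b : [N] × [j] → ℂ`:
`∑_{(σ,ρ) ∈ S_N×S_N, σ(i)=ρ(i) ∀ i > j} ∏_{i=1}^j a(σ(i),i)·b(ρ(i),i)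
 = (N−j)! · ∑_{J ⊆ [N], |J|=j} ∑_{σ₀,ρ₀ : [j] ≃ J} ∏_{i=1}^j a(σ₀(i),i)·b(ρ₀(i),i)`. -/
theorem restricted_permutation_pair_identity (N j : ℕ) (hj : j ≤ N)
    (a b : Fin N → Fin j → ℂ) :
    ∑ σρ ∈ Finset.univ.filter
        (fun σρ : Equiv.Perm (Fin N) × Equiv.Perm (Fin N) =>
          ∀ i : Fin N, j ≤ (i : ℕ) → σρ.1 i = σρ.2 i),
      ∏ i : Fin j, a (σρ.1 (Fin.castLE hj i)) i * b (σρ.2 (Fin.castLE hj i)) i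
    = (Nat.factorial (N - j) : ℂ) *
      ∑ J ∈ Finset.powersetCard j (Finset.univ : Finset (Fin N)),
        ∑ σ₀ : Fin j ≃ {x : Fin N // x ∈ J},
        ∑ ρ₀ : Fin j ≃ {x : Fin N // x ∈ J},
          ∏ i : Fin j, a (σ₀ i) i * b (ρ₀ i) i := by
  simpa [Fin.range_castLE] using restricted_permutation_pair_identity_general
    (Fin.castLEEmb hj) fun s r => ∏ i : Fin j, a (s i) i * b (r i) i
end

section
/- Let U be an N×M complex matrix whose rows are orthonormal, i.e., ∑_{r=1}^{M} U(a,r) · conj(U(b,r)) = δ_{ab} for all a, b ∈ [N]. Then for every 0 ≤ j ≤ N and every choice of r₁, …, r_j ∈ [M]: ∑_{r_{j+1}, …, r_N ∈ [M]} ∑_{(σ,ρ) ∈ S_N × S_N} ∏_{i=1}^{N} U(σ(i), r_i) · conj(U(ρ(i), r_i)) = ∑_{(σ,ρ) ∈ S_N × S_N, σ(i)=ρ(i) for all i with j < i ≤ N} ∏_{i=1}^{j} U(σ(i), r_i) · conj(U(ρ(i), r_i)). -/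
/-!
Exchanging the finite sums, the pair `(σ, ρ)` contributes the prescribed factors times
`∏ i, ∑ x, U (σ i) x * conj (U (ρ i) x)` over the summed coordinates `i`. By orthonormality each
of these inner sums is `1` or `0` according to whether `σ i = ρ i`, so only the pairs agreeing on
all summed coordinates survive.
-/

section

open Finset Function

variable {α β κ R : Type*} [Fintype α] [DecidableEq α] [Fintype β] [Fintype κ] [DecidableEq κ]
  [CommSemiring R] {e : β → κ}

theorem sum_prod_extensions_eq_prod_mul_prod_sum (he : Injective e) (r : β → α)
    (f : κ → α → R) :
    ∑ t : κ → α with ∀ b, t (e b) = r b, ∏ i, f i (t i) =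
      (∏ b, f (e b) (r b)) * ∏ i with i ∉ Set.range e, ∑ x, f i x := by
  let allowed (i : κ) : Finset α := {x | ∀ b, e b = i → x = r b}
  have extensions_eq_pi : ({t | ∀ b, t (e b) = r b} : Finset (κ → α)) =
      Fintype.piFinset allowed := by
    ext t
    simp only [mem_filter_univ, Fintype.mem_piFinset, allowed]
    exact ⟨fun h i b hb => hb ▸ h b, fun h b => h _ b rfl⟩
  have allowed_apply (b : β) : allowed (e b) = {r b} := by
    ext x
    simp [allowed, he.eq_iff]
  have allowed_of_notMem_range {i : κ} (hi : i ∉ Set.range e) : allowed i = univ :=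
    filter_true_of_mem fun _ _ b hb => absurd ⟨b, hb⟩ hi
  calc ∑ t : κ → α with ∀ b, t (e b) = r b, ∏ i, f i (t i)
    _ = ∏ i, ∑ x ∈ allowed i, f i x := by rw [extensions_eq_pi, prod_univ_sum]
    _ = (∏ i with i ∈ Set.range e, ∑ x ∈ allowed i, f i x) *
          ∏ i with i ∉ Set.range e, ∑ x ∈ allowed i, f i x :=
        (prod_filter_mul_prod_filter_not ..).symm
    _ = (∏ b, f (e b) (r b)) * ∏ i with i ∉ Set.range e, ∑ x, f i x := by
        congr 1
        · simp [prod_image he.injOn, allowed_apply]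
        · refine prod_congr rfl fun i hi => ?_
          rw [allowed_of_notMem_range (mem_filter_univ i |>.mp hi)]

variable {ι : Type*} [DecidableEq ι] {U V : ι → α → R}

theorem sum_prod_extensions_of_biorthogonal (he : Injective e) (r : β → α)
    (hUV : ∀ a b, ∑ x, U a x * V b x = if a = b then 1 else 0) (σ ρ : κ → ι) :
    ∑ t : κ → α with ∀ b, t (e b) = r b, ∏ i, U (σ i) (t i) * V (ρ i) (t i) =
      if ∀ i ∉ Set.range e, σ i = ρ i then
        ∏ b, U (σ (e b)) (r b) * V (ρ (e b)) (r b)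
      else 0 := by
  rw [sum_prod_extensions_eq_prod_mul_prod_sum he r fun i x => U (σ i) x * V (ρ i) x]
  simp only [hUV, prod_ite_zero, prod_const_one, mem_filter_univ, mul_ite, mul_one, mul_zero]

theorem first_quantized_marginal_general {F : Type*} [Fintype F] [FunLike F κ ι]
    (he : Injective e) (r : β → α)
    (hUV : ∀ a b, ∑ x, U a x * V b x = if a = b then 1 else 0) :
    ∑ t : κ → α with ∀ b, t (e b) = r b,
      ∑ σ : F, ∑ ρ : F, ∏ i, U (σ i) (t i) * V (ρ i) (t i) =
    ∑ σρ : F × F with ∀ i ∉ Set.range e, σρ.1 i = σρ.2 i,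
      ∏ b, U (σρ.1 (e b)) (r b) * V (σρ.2 (e b)) (r b) := by
  calc ∑ t : κ → α with ∀ b, t (e b) = r b,
        ∑ σ : F, ∑ ρ : F, ∏ i, U (σ i) (t i) * V (ρ i) (t i)
    _ = ∑ σρ : F × F, ∑ t : κ → α with ∀ b, t (e b) = r b,
          ∏ i, U (σρ.1 i) (t i) * V (σρ.2 i) (t i) := by
        simp_rw [← Fintype.sum_prod_type']
        exact sum_comm
    _ = ∑ σρ : F × F with ∀ i ∉ Set.range e, σρ.1 i = σρ.2 i,
          ∏ b, U (σρ.1 (e b)) (r b) * V (σρ.2 (e b)) (r b) := by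
        simp only [sum_prod_extensions_of_biorthogonal he r hUV, sum_filter]

end

/-- For an `N×M` complex matrix `U` with orthonormal rows, `j ≤ N`, and
fixed `r₁,…,r_j ∈ [M]`, summing the first-quantized Boson Sampling weight over the last
`N−j` coordinates yields the restricted-permutation-pair marginal expression. -/
theorem first_quantized_marginal (N M j : ℕ) (hj : j ≤ N)
    (U : Fin N → Fin M → ℂ)
    (hU : ∀ a b : Fin N,
      (∑ r : Fin M, U a r * (starRingEnd ℂ) (U b r)) = if a = b then 1 else 0)
    (r : Fin j → Fin M) :
    ∑ t ∈ Finset.univ.filter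
        (fun t : Fin N → Fin M => ∀ i : Fin j, t (Fin.castLE hj i) = r i),
      ∑ σ : Equiv.Perm (Fin N), ∑ ρ : Equiv.Perm (Fin N),
        ∏ i : Fin N, U (σ i) (t i) * (starRingEnd ℂ) (U (ρ i) (t i))
    = ∑ σρ ∈ Finset.univ.filter
        (fun σρ : Equiv.Perm (Fin N) × Equiv.Perm (Fin N) =>
          ∀ i : Fin N, j ≤ (i : ℕ) → σρ.1 i = σρ.2 i),
      ∏ i : Fin j,
        U (σρ.1 (Fin.castLE hj i)) (r i) * (starRingEnd ℂ) (U (σρ.2 (Fin.castLE hj i)) (r i)) := by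
  convert first_quantized_marginal_general (F := Equiv.Perm (Fin N)) (Fin.castLE_injective hj) r hU
  simp [Fin.range_castLE]
end
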